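/- Quantum-number identity underlying the commutator relation [E_k, F_k] in the orthogonal web category: for all integers a, b, one has [a][b][z;−2] − [a−1][b][z;−1] − [a][b−1][z;−1] + [a−1][b−1][z;0] = [z;−a−b]. -/

import Mathlib

noncomputable section

/-- The quantum integer `[m] = (q^m − q^{−m})/(q − q^{−1})`. -/
def qint {F : Type*} [Field F] (q : F) (m : ℤ) : F :=
  (q ^ m - q ^ (-m)) / (q - q⁻¹)

/-- The two-parameter quantum number `[z;s] = (z·q^s − z^{−1}·q^{−s})/(q − q^{−1})`. -/
def qzint {F : Type*} [Field F] (q z : F) (s : ℤ) : F :=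
  (z * q ^ s - z⁻¹ * q ^ (-s)) / (q - q⁻¹)

/-- Quantum-number identity underlying the commutator relation `[E_k, F_k]` in the
orthogonal web category: for all integers `a`, `b`,
`[a][b][z;−2] − [a−1][b][z;−1] − [a][b−1][z;−1] + [a−1][b−1][z;0] = [z;−a−b]`. -/
theorem quantum_number_identity_orthogonal {F : Type*} [Field F] (q z : F)
    (hq : q ≠ 0) (hz : z ≠ 0) (hq2 : q ^ 2 ≠ 1) (a b : ℤ) :
    qint q a * qint q b * qzint q z (-2)
      - qint q (a - 1) * qint q b * qzint q z (-1)
      - qint q a * qint q (b - 1) * qzint q z (-1)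
      + qint q (a - 1) * qint q (b - 1) * qzint q z 0
    = qzint q z (-(a + b)) := by
  have hA : q ^ a ≠ 0 := zpow_ne_zero a hq
  have hB : q ^ b ≠ 0 := zpow_ne_zero b hq
  have hD : q ^ 2 - 1 ≠ 0 := sub_ne_zero.mpr hq2
  have hden : q - q⁻¹ = (q ^ 2 - 1) / q := by field_simp
  have ha : q ^ (a - 1) = q ^ a * q⁻¹ := zpow_sub_one₀ hq a
  have hb : q ^ (b - 1) = q ^ b * q⁻¹ := zpow_sub_one₀ hq b
  have h2 : q ^ (2 : ℤ) = q ^ 2 := zpow_ofNat q 2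
  -- With `A = q ^ a` and `B = q ^ b`, both sides are rational functions of `q, z, A, B`.
  simp only [qint, qzint, hden, zpow_neg, zpow_add₀ hq, ha, hb, h2, zpow_one, zpow_zero, inv_inv,
    neg_zero]
  generalize q ^ a = A at hA ⊢
  generalize q ^ b = B at hB ⊢
  field_simp
  ring
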